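/- Let a > 0 and let φ₁ : ℝ → ℝ be a 1-kink. For every compactly supported C¹ function v : ℝ → ℝ that is not identically zero, the quadratic form of the linearized operator L₁ is strictly positive: ∫_{−∞}^{∞} ( v'(r)² + ( 2 − 4·sin²(φ₁(r)) + a²/(r²+a²)² )·v(r)² ) dr > 0. In particular L₁ has no negative or zero eigenvalues, so the 1-kink is linearly stable. -/

import Mathlib

open Real Filter

/-!
The function `w = √(r² + a²) sin φ₁` satisfies `L₁ w = (φ₁'² - 2 sin² φ₁) w`. The energy
`φ₁'² - 2 sin² φ₁` has derivative `-4 r φ₁'² / (r² + a²)`, so it increases up to the throat `r = 0`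
and decreases after it; since `sin φ₁ → 0` at both ends, it is nonnegative everywhere. Hence
`φ₁' = 0` forces `sin φ₁ = 0` at the same point, which by uniqueness makes `φ₁` constant. A kink is
therefore strictly increasing, so that `sin φ₁ > 0` and `w` is a positive supersolution of `L₁`.
With `g = w' / w` and `V` the potential of `L₁`, completing the square gives
`v'² + V v² = (v' - g v)² + (V - g' - g²) v² + (g v²)'`, where `V - g' - g²` is the energy. The last
term integrates to zero, and `v' = g v` has no nonzero solution of compact support.

The argument is the same for the equation `φ'' + 2 h φ' = sin (2 φ)` with `0 ≤ r h(r)`: the weight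
`√(r² + a²)` becomes `ρ` with `ρ' / ρ = h`, and the term `a² / (r² + a²)²` of the potential is
`ρ'' / ρ = h' + h²`.
-/

section Uniqueness

variable {E : Type*} [NormedAddCommGroup E] [NormedSpace ℝ E] {f f' : ℝ → E} {k : ℝ → ℝ} {t₀ : ℝ}

theorem eq_zero_of_norm_deriv_le_mul_norm_of_ge (hf : ∀ t, HasDerivAt f (f' t) t)
    (hk : Continuous k) (bound : ∀ t, ‖f' t‖ ≤ k t * ‖f t‖) (h₀ : f t₀ = 0) {t : ℝ}
    (ht : t₀ ≤ t) : f t = 0 := by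
  obtain ⟨K, hK⟩ := isCompact_Icc.bddAbove_image (hk.continuousOn (s := Set.Icc t₀ t))
  refine eq_zero_of_abs_deriv_le_mul_abs_self_of_eq_zero_right (f' := f') (K := K)
    (HasDerivAt.continuousOn fun s _ => hf s) (fun s _ => (hf s).hasDerivWithinAt) h₀
    (fun s hs => (bound s).trans ?_) t ⟨ht, le_rfl⟩
  gcongr
  exact hK (Set.mem_image_of_mem k (Set.Ico_subset_Icc_self hs))

theorem eq_zero_of_norm_deriv_le_mul_norm (hf : ∀ t, HasDerivAt f (f' t) t)
    (hk : Continuous k) (bound : ∀ t, ‖f' t‖ ≤ k t * ‖f t‖) (h₀ : f t₀ = 0) : f = 0 := by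
  funext t
  rcases le_total t₀ t with ht | ht
  · exact eq_zero_of_norm_deriv_le_mul_norm_of_ge hf hk bound h₀ ht
  · have hf_neg : ∀ s, HasDerivAt (fun s => f (-s)) (-f' (-s)) s := fun s => by
      simpa [Function.comp_def] using (hf (-s)).scomp s (hasDerivAt_neg s)
    simpa using eq_zero_of_norm_deriv_le_mul_norm_of_ge (t₀ := -t₀) (t := -t) hf_neg
      (hk.comp continuous_neg) (fun s => by simpa using bound (-s)) (by simpa using h₀)
      (neg_le_neg ht)

end Uniqueness

section RealFunctions

theorem nonneg_of_monotoneOn_Iic_of_antitoneOn_Ici {f b : ℝ → ℝ} {c : ℝ}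
    (hmono : MonotoneOn f (Set.Iic c)) (hanti : AntitoneOn f (Set.Ici c)) (hb : ∀ r, b r ≤ f r)
    (hbot : Tendsto b atBot (nhds 0)) (htop : Tendsto b atTop (nhds 0)) (r : ℝ) : 0 ≤ f r := by
  rcases le_total r c with hr | hr
  · refine le_of_tendsto hbot ?_
    filter_upwards [eventually_le_atBot r] with x hx
    exact (hb x).trans (hmono (hx.trans hr) hr hx)
  · refine le_of_tendsto htop ?_
    filter_upwards [eventually_ge_atTop r] with x hx
    exact (hb x).trans (hanti hr (hr.trans hx) hx)

theorem strictMono_or_strictAnti_of_deriv_ne_zero {f : ℝ → ℝ} (hf : ∀ x, deriv f x ≠ 0) :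
    StrictMono f ∨ StrictAnti f := by
  have hdiff : Differentiable ℝ f := fun x => differentiableAt_of_deriv_ne_zero (hf x)
  rcases hasDerivWithinAt_forall_lt_or_forall_gt_of_forall_ne convex_univ
    (fun x _ => (hdiff x).hasDerivAt.hasDerivWithinAt) (fun x _ => hf x) with hneg | hpos
  · exact .inr (strictAnti_of_deriv_neg fun x => hneg x trivial)
  · exact .inl (strictMono_of_deriv_pos fun x => hpos x trivial)

theorem mem_Ioo_of_strictMono_of_tendsto {f : ℝ → ℝ} {l u : ℝ} (hf : StrictMono f)
    (hbot : Tendsto f atBot (nhds l)) (htop : Tendsto f atTop (nhds u)) (x : ℝ) :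
    f x ∈ Set.Ioo l u :=
  ⟨(hf.monotone.le_of_tendsto hbot (x - 1)).trans_lt (hf (sub_one_lt x)),
    (hf (lt_add_one x)).trans_le (hf.monotone.ge_of_tendsto htop (x + 1))⟩

end RealFunctions

section RiccatiCriterion

theorem integral_deriv_eq_zero_of_hasCompactSupport {f : ℝ → ℝ} (hf : ContDiff ℝ 1 f)
    (hsupp : HasCompactSupport f) : ∫ r, deriv f r = 0 :=
  MeasureTheory.integral_eq_zero_of_hasDerivAt_of_integrable
    (fun r => (hf.differentiable one_ne_zero r).hasDerivAt)
    (hf.continuous_deriv_one.integrable_of_hasCompactSupport hsupp.deriv)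
    (hf.continuous.integrable_of_hasCompactSupport hsupp)

/-- The integrand left from `v'² + V v²` after completing the square with `g` and discarding the
total derivative `(g v²)'`. -/
noncomputable def completedSquare (g V v : ℝ → ℝ) (r : ℝ) : ℝ :=
  (deriv v r - g r * v r) ^ 2 + (V r - (deriv g r + g r ^ 2)) * v r ^ 2

variable {g V v : ℝ → ℝ}

theorem deriv_sq_add_mul_sq_eq (hg : Differentiable ℝ g) (hv : Differentiable ℝ v) (r : ℝ) :
    deriv v r ^ 2 + V r * v r ^ 2 =
      completedSquare g V v r + deriv (fun r => g r * v r ^ 2) r := by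
  have hderiv : deriv (fun r => g r * v r ^ 2) r
      = deriv g r * v r ^ 2 + g r * (2 * v r * deriv v r) := by
    simpa using ((hg r).hasDerivAt.fun_mul ((hv r).hasDerivAt.fun_pow 2)).deriv
  rw [hderiv, completedSquare]
  ring

theorem continuous_completedSquare (hg : ContDiff ℝ 1 g) (hV : Continuous V)
    (hv : ContDiff ℝ 1 v) : Continuous (completedSquare g V v) := by
  have := hg.continuous
  have := hg.continuous_deriv_one
  have := hv.continuous
  have := hv.continuous_deriv_one
  unfold completedSquare
  fun_prop

theorem hasCompactSupport_completedSquare (hsupp : HasCompactSupport v) :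
    HasCompactSupport (completedSquare g V v) :=
  HasCompactSupport.intro hsupp fun r hr => by
    have hderiv : deriv v r = 0 :=
      Function.notMem_support.1 fun h => hr (support_deriv_subset h)
    simp [completedSquare, hderiv, image_eq_zero_of_notMem_tsupport hr]

theorem integral_deriv_sq_add_mul_sq_eq (hg : ContDiff ℝ 1 g) (hV : Continuous V)
    (hv : ContDiff ℝ 1 v) (hsupp : HasCompactSupport v) :
    ∫ r, (deriv v r ^ 2 + V r * v r ^ 2) = ∫ r, completedSquare g V v r := by
  have hgv : ContDiff ℝ 1 fun r => g r * v r ^ 2 := hg.mul (hv.pow 2)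
  have hgv_supp : HasCompactSupport fun r => g r * v r ^ 2 :=
    HasCompactSupport.intro hsupp fun r hr => by simp [image_eq_zero_of_notMem_tsupport hr]
  simp_rw [deriv_sq_add_mul_sq_eq (hg.differentiable one_ne_zero) (hv.differentiable one_ne_zero)]
  rw [MeasureTheory.integral_add, integral_deriv_eq_zero_of_hasCompactSupport hgv hgv_supp,
    add_zero]
  · exact (continuous_completedSquare hg hV hv).integrable_of_hasCompactSupport
      (hasCompactSupport_completedSquare hsupp)
  · exact hgv.continuous_deriv_one.integrable_of_hasCompactSupport hgv_supp.deriv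

theorem eq_zero_of_deriv_eq_mul_of_hasCompactSupport (hg : Continuous g)
    (hv : Differentiable ℝ v) (hderiv : ∀ r, deriv v r = g r * v r)
    (hsupp : HasCompactSupport v) : v = 0 := by
  obtain ⟨r₀, hr₀⟩ := (Set.ne_univ_iff_exists_notMem _).1 hsupp.isCompact.ne_univ
  exact eq_zero_of_norm_deriv_le_mul_norm (fun r => (hv r).hasDerivAt) hg.norm
    (fun r => by rw [hderiv, norm_mul]) (image_eq_zero_of_notMem_tsupport hr₀)

theorem integral_deriv_sq_add_mul_sq_pos (hg : ContDiff ℝ 1 g) (hV : Continuous V)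
    (hriccati : ∀ r, deriv g r + g r ^ 2 ≤ V r)
    (hv : ContDiff ℝ 1 v) (hsupp : HasCompactSupport v) (hne : v ≠ 0) :
    0 < ∫ r, (deriv v r ^ 2 + V r * v r ^ 2) := by
  have hpotential (r : ℝ) : 0 ≤ (V r - (deriv g r + g r ^ 2)) * v r ^ 2 :=
    mul_nonneg (sub_nonneg.2 (hriccati r)) (sq_nonneg _)
  obtain ⟨x, hx⟩ : ∃ x, completedSquare g V v x ≠ 0 := by
    by_contra! hzero
    refine hne (eq_zero_of_deriv_eq_mul_of_hasCompactSupport hg.continuous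
      (hv.differentiable one_ne_zero) (fun r => ?_) hsupp)
    have hsq := ((add_eq_zero_iff_of_nonneg (sq_nonneg _) (hpotential r)).1 (hzero r)).1
    exact sub_eq_zero.1 (pow_eq_zero_iff two_ne_zero |>.1 hsq)
  rw [integral_deriv_sq_add_mul_sq_eq hg hV hv hsupp]
  exact (continuous_completedSquare hg hV hv).integral_pos_of_hasCompactSupport_nonneg_nonzero
    (hasCompactSupport_completedSquare hsupp)
    (fun r => add_nonneg (sq_nonneg _) (hpotential r)) hx

end RiccatiCriterion

/-- `φ` is a `C²` solution of `φ'' + 2 h φ' = sin (2 φ)`. Writing the damping as `2 h` makes `h` the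
logarithmic derivative of the weight that turns the linearization into a Schrödinger operator. -/
structure IsKinkSolution (h φ : ℝ → ℝ) : Prop where
  contDiff : ContDiff ℝ 2 φ
  deriv_deriv_add : ∀ r, deriv (deriv φ) r + 2 * h r * deriv φ r = sin (2 * φ r)

/-- `φ` is a `1`-kink: a solution running from `0` at `-∞` to `π` at `+∞`. -/
structure IsOneKink (h φ : ℝ → ℝ) : Prop extends IsKinkSolution h φ where
  tendsto_atBot : Tendsto φ atBot (nhds 0)
  tendsto_atTop : Tendsto φ atTop (nhds π)

/-- Twice the mechanical energy of the damped pendulum `φ'' + 2 h φ' = sin (2 φ)`. -/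
noncomputable def kinkEnergy (φ : ℝ → ℝ) (r : ℝ) : ℝ :=
  deriv φ r ^ 2 - 2 * sin (φ r) ^ 2

/-- The logarithmic derivative of `ρ sin φ`, where `ρ' / ρ = h`. It takes a junk value where
`sin φ` vanishes. -/
noncomputable def kinkLogDeriv (h φ : ℝ → ℝ) (r : ℝ) : ℝ :=
  h r + deriv φ r * cos (φ r) / sin (φ r)

theorem norm_prodMk_le_mul_norm_of_abs_le_one {c : ℝ} (hc : |c| ≤ 1) (k p s : ℝ) :
    ‖(2 * s * c - 2 * k * p, c * p)‖ ≤ (2 + 2 * |k|) * ‖(p, s)‖ := by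
  have hp : |p| ≤ ‖(p, s)‖ := norm_fst_le (p, s)
  have hs : |s| ≤ ‖(p, s)‖ := norm_snd_le (p, s)
  refine max_le ?_ ?_
  · calc |2 * s * c - 2 * k * p|
      _ ≤ |2 * s * c| + |2 * k * p| := abs_sub _ _
      _ = 2 * |s| * |c| + 2 * |k| * |p| := by simp only [abs_mul, abs_two]
      _ ≤ 2 * ‖(p, s)‖ * 1 + 2 * |k| * ‖(p, s)‖ := by gcongr
      _ = (2 + 2 * |k|) * ‖(p, s)‖ := by ring
  · calc |c * p| = |c| * |p| := abs_mul _ _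
      _ ≤ (2 + 2 * |k|) * ‖(p, s)‖ := by
        gcongr
        linarith [abs_nonneg k]

namespace IsKinkSolution

variable {h φ : ℝ → ℝ}

theorem contDiff_deriv (hφ : IsKinkSolution h φ) : ContDiff ℝ 1 (deriv φ) :=
  ContDiff.deriv' (by simpa [one_add_one_eq_two] using hφ.contDiff)

theorem hasDerivAt (hφ : IsKinkSolution h φ) (r : ℝ) : HasDerivAt φ (deriv φ r) r :=
  (hφ.contDiff.differentiable two_ne_zero r).hasDerivAt

theorem hasDerivAt_deriv (hφ : IsKinkSolution h φ) (r : ℝ) :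
    HasDerivAt (deriv φ) (2 * sin (φ r) * cos (φ r) - 2 * h r * deriv φ r) r := by
  rw [← sin_two_mul, ← hφ.deriv_deriv_add, add_sub_cancel_right]
  exact (hφ.contDiff_deriv.differentiable one_ne_zero r).hasDerivAt

theorem hasDerivAt_kinkEnergy (hφ : IsKinkSolution h φ) (r : ℝ) :
    HasDerivAt (kinkEnergy φ) (-4 * h r * deriv φ r ^ 2) r := by
  refine (((hφ.hasDerivAt_deriv r).pow 2).sub
    (((hφ.hasDerivAt r).sin.pow 2).const_mul 2)).congr_deriv ?_
  ring

theorem monotoneOn_kinkEnergy (hφ : IsKinkSolution h φ) (hsign : ∀ r, 0 ≤ r * h r) :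
    MonotoneOn (kinkEnergy φ) (Set.Iic 0) := by
  refine monotoneOn_of_hasDerivWithinAt_nonneg (convex_Iic 0)
    (HasDerivAt.continuousOn fun r _ => hφ.hasDerivAt_kinkEnergy r)
    (fun r _ => (hφ.hasDerivAt_kinkEnergy r).hasDerivWithinAt) fun r hr => ?_
  rw [interior_Iic] at hr
  have hh : h r ≤ 0 := nonpos_of_mul_nonneg_right (hsign r) hr
  nlinarith [mul_nonneg (neg_nonneg.2 hh) (sq_nonneg (deriv φ r))]

theorem antitoneOn_kinkEnergy (hφ : IsKinkSolution h φ) (hsign : ∀ r, 0 ≤ r * h r) :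
    AntitoneOn (kinkEnergy φ) (Set.Ici 0) := by
  refine antitoneOn_of_hasDerivWithinAt_nonpos (convex_Ici 0)
    (HasDerivAt.continuousOn fun r _ => hφ.hasDerivAt_kinkEnergy r)
    (fun r _ => (hφ.hasDerivAt_kinkEnergy r).hasDerivWithinAt) fun r hr => ?_
  rw [interior_Ici] at hr
  have hh : 0 ≤ h r := nonneg_of_mul_nonneg_right (hsign r) hr
  nlinarith [mul_nonneg hh (sq_nonneg (deriv φ r))]

theorem eq_const_of_deriv_eq_zero_of_sin_eq_zero (hφ : IsKinkSolution h φ) (hh : Continuous h)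
    {r₀ : ℝ} (hderiv : deriv φ r₀ = 0) (hsin : sin (φ r₀) = 0) (r : ℝ) : φ r = φ r₀ := by
  -- `(φ', sin φ)` solves a linear system, once `cos φ` is regarded as a known coefficient.
  have hpair : (fun r => (deriv φ r, sin (φ r))) = 0 :=
    eq_zero_of_norm_deriv_le_mul_norm (k := fun r => 2 + 2 * |h r|) (t₀ := r₀)
      (fun r => (hφ.hasDerivAt_deriv r).prodMk (hφ.hasDerivAt r).sin) (by fun_prop)
      (fun r => norm_prodMk_le_mul_norm_of_abs_le_one (abs_cos_le_one (φ r)) (h r) _ _)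
      (by simp [hderiv, hsin])
  exact is_const_of_deriv_eq_zero (fun r => (hφ.hasDerivAt r).differentiableAt)
    (fun r => congrArg Prod.fst (congrFun hpair r)) r r₀

theorem contDiff_kinkLogDeriv (hφ : IsKinkSolution h φ) (hh : ContDiff ℝ 1 h)
    (hsin : ∀ r, sin (φ r) ≠ 0) : ContDiff ℝ 1 (kinkLogDeriv h φ) := by
  have hφ_one : ContDiff ℝ 1 φ := hφ.contDiff.of_le one_le_two
  exact hh.add ((hφ.contDiff_deriv.mul hφ_one.cos).div hφ_one.sin hsin)

theorem deriv_kinkLogDeriv_add_sq (hφ : IsKinkSolution h φ) (hh : Differentiable ℝ h) {r : ℝ}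
    (hsin : sin (φ r) ≠ 0) :
    deriv (kinkLogDeriv h φ) r + kinkLogDeriv h φ r ^ 2 =
      2 - 4 * sin (φ r) ^ 2 + (deriv h r + h r ^ 2) - kinkEnergy φ r := by
  have hderiv : deriv (kinkLogDeriv h φ) r = _ :=
    ((hh r).hasDerivAt.fun_add (((hφ.hasDerivAt_deriv r).fun_mul
      (hφ.hasDerivAt r).cos).fun_div (hφ.hasDerivAt r).sin hsin)).deriv
  rw [hderiv, kinkLogDeriv, kinkEnergy]
  field_simp
  linear_combination 2 * sin (φ r) ^ 2 * sin_sq_add_cos_sq (φ r)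

end IsKinkSolution

namespace IsOneKink

variable {h φ : ℝ → ℝ}

theorem kinkEnergy_nonneg (hφ : IsOneKink h φ) (hsign : ∀ r, 0 ≤ r * h r) (r : ℝ) :
    0 ≤ kinkEnergy φ r := by
  have hcont : Continuous fun x : ℝ => -(2 * sin x ^ 2) := by fun_prop
  refine nonneg_of_monotoneOn_Iic_of_antitoneOn_Ici (b := fun r => -(2 * sin (φ r) ^ 2))
    (hφ.monotoneOn_kinkEnergy hsign) (hφ.antitoneOn_kinkEnergy hsign) (fun r => ?_) ?_ ?_ r
  · linarith [sq_nonneg (deriv φ r), kinkEnergy.eq_def φ r]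
  · simpa [Function.comp_def] using (hcont.tendsto 0).comp hφ.tendsto_atBot
  · simpa [Function.comp_def] using (hcont.tendsto π).comp hφ.tendsto_atTop

theorem deriv_ne_zero (hφ : IsOneKink h φ) (hh : Continuous h) (hsign : ∀ r, 0 ≤ r * h r)
    (r : ℝ) : deriv φ r ≠ 0 := by
  intro hderiv
  have hsin : sin (φ r) = 0 := by
    have henergy := hφ.kinkEnergy_nonneg hsign r
    rw [kinkEnergy, hderiv] at henergy
    exact pow_eq_zero_iff two_ne_zero |>.1 (by linarith [sq_nonneg (sin (φ r))])
  have hconst : φ = fun _ => φ r :=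
    funext (hφ.eq_const_of_deriv_eq_zero_of_sin_eq_zero hh hderiv hsin)
  have hzero : φ r = 0 := tendsto_nhds_unique tendsto_const_nhds (hconst ▸ hφ.tendsto_atBot)
  have hpi : φ r = π := tendsto_nhds_unique tendsto_const_nhds (hconst ▸ hφ.tendsto_atTop)
  exact pi_ne_zero (hpi.symm.trans hzero)

theorem strictMono (hφ : IsOneKink h φ) (hh : Continuous h) (hsign : ∀ r, 0 ≤ r * h r) :
    StrictMono φ := by
  refine (strictMono_or_strictAnti_of_deriv_ne_zero (hφ.deriv_ne_zero hh hsign)).resolve_right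
    fun hanti => pi_pos.not_ge ?_
  exact (hanti.antitone.le_of_tendsto hφ.tendsto_atTop 0).trans
    (hanti.antitone.ge_of_tendsto hφ.tendsto_atBot 0)

theorem sin_pos (hφ : IsOneKink h φ) (hh : Continuous h) (hsign : ∀ r, 0 ≤ r * h r) (r : ℝ) :
    0 < sin (φ r) :=
  sin_pos_of_mem_Ioo
    (mem_Ioo_of_strictMono_of_tendsto (hφ.strictMono hh hsign) hφ.tendsto_atBot hφ.tendsto_atTop r)

end IsOneKink

theorem quadratic_form_pos_general {h φ v : ℝ → ℝ} (hh : ContDiff ℝ 1 h)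
    (hsign : ∀ r, 0 ≤ r * h r) (hφ : IsOneKink h φ)
    (hv : ContDiff ℝ 1 v) (hsupp : HasCompactSupport v) (hne : v ≠ 0) :
    0 < ∫ r, (deriv v r ^ 2
      + (2 - 4 * sin (φ r) ^ 2 + (deriv h r + h r ^ 2)) * v r ^ 2) := by
  have hsin : ∀ r, sin (φ r) ≠ 0 := fun r => (hφ.sin_pos hh.continuous hsign r).ne'
  have hV : Continuous fun r => 2 - 4 * sin (φ r) ^ 2 + (deriv h r + h r ^ 2) := by
    have := hφ.contDiff.continuous
    have := hh.continuous
    have := hh.continuous_deriv_one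
    fun_prop
  refine integral_deriv_sq_add_mul_sq_pos (hφ.contDiff_kinkLogDeriv hh hsin) hV
    (fun r => ?_) hv hsupp hne
  rw [hφ.deriv_kinkLogDeriv_add_sq (hh.differentiable one_ne_zero) (hsin r)]
  exact sub_le_self _ (hφ.kinkEnergy_nonneg hsign r)

section Wormhole

variable {a : ℝ}

theorem contDiff_div_sq_add_sq (ha : a ≠ 0) {n : WithTop ℕ∞} :
    ContDiff ℝ n fun r : ℝ => r / (r ^ 2 + a ^ 2) :=
  contDiff_id.div (by fun_prop) fun r => by positivity

theorem deriv_div_sq_add_sq_add_sq (ha : a ≠ 0) (r : ℝ) :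
    deriv (fun r : ℝ => r / (r ^ 2 + a ^ 2)) r + (r / (r ^ 2 + a ^ 2)) ^ 2 =
      a ^ 2 / (r ^ 2 + a ^ 2) ^ 2 := by
  have hden : r ^ 2 + a ^ 2 ≠ 0 := by positivity
  rw [((hasDerivAt_id' r).fun_div (((hasDerivAt_id' r).fun_pow 2).add_const (a ^ 2)) hden).deriv]
  field_simp
  ring

end Wormhole

/-- The quadratic form of the linearized operator `L₁` around the `1`-kink is strictly
positive on nonzero compactly supported `C¹` functions: the `1`-kink is linearly stable. -/
theorem quadratic_form_pos (a : ℝ) (ha : 0 < a) (φ₁ : ℝ → ℝ)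
    (hφ : ContDiff ℝ 2 φ₁)
    (hφeq : ∀ r : ℝ, deriv (deriv φ₁) r + (2 * r / (r ^ 2 + a ^ 2)) * deriv φ₁ r
        = Real.sin (2 * φ₁ r))
    (hbot : Tendsto φ₁ atBot (nhds 0))
    (htop : Tendsto φ₁ atTop (nhds Real.pi))
    (v : ℝ → ℝ) (hv : ContDiff ℝ 1 v) (hsupp : HasCompactSupport v) (hne : v ≠ 0) :
    0 < ∫ r : ℝ, ((deriv v r) ^ 2
        + (2 - 4 * Real.sin (φ₁ r) ^ 2 + a ^ 2 / (r ^ 2 + a ^ 2) ^ 2) * (v r) ^ 2) := by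
  have hsign (r : ℝ) : 0 ≤ r * (r / (r ^ 2 + a ^ 2)) := by
    rw [← mul_div_assoc, ← sq]
    positivity
  have hkink : IsOneKink (fun r => r / (r ^ 2 + a ^ 2)) φ₁ :=
    ⟨⟨hφ, fun r => by rw [← mul_div_assoc, hφeq]⟩, hbot, htop⟩
  simpa only [deriv_div_sq_add_sq_add_sq ha.ne'] using
    quadratic_form_pos_general (contDiff_div_sq_add_sq ha.ne') hsign hkink hv hsupp hne
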